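/- arXiv:0906.4152 — 2 statements merged into one kernel-verified Lean document; each statement's English description precedes it below -/
import Mathlib

section
/- Let I_N ⊆ ℚ[u,v,w] be the ideal generated, with h = 3u+2v−w, by g₄₁ = −8u⁴−14u³v−9u²v²−2uv³+2(2u+v)³h−3(2u+v)²h²+2(2u+v)h³, g₄₂ = 8u⁴+4u³v−6u²v²−7uv³−2v⁴−(16u³+14u²v−v³+2uv²)h+6(2u²+uv)h²−4uh³, g₅₁ = (2w−4u−3v)h⁴, g₅₂ = u⁴v, and g₆ = 16u⁶+105u³v³+55u²v⁴+16uv⁵+2v⁶. Then u⁹ ∉ I_N. -/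
open MvPolynomial

/-- The variable `u` in `ℚ[u,v,w]`. -/
noncomputable def u : MvPolynomial (Fin 3) ℚ := X 0
/-- The variable `v` in `ℚ[u,v,w]`. -/
noncomputable def v : MvPolynomial (Fin 3) ℚ := X 1
/-- The variable `w` in `ℚ[u,v,w]`. -/
noncomputable def w : MvPolynomial (Fin 3) ℚ := X 2

/-- `h = 3u + 2v − w`. -/
noncomputable def h : MvPolynomial (Fin 3) ℚ := 3*u + 2*v - w

/-- `g₄₁ = −8u⁴−14u³v−9u²v²−2uv³+2(2u+v)³h−3(2u+v)²h²+2(2u+v)h³`. -/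
noncomputable def g₄₁ : MvPolynomial (Fin 3) ℚ :=
  -8*u^4 - 14*u^3*v - 9*u^2*v^2 - 2*u*v^3
    + 2*(2*u + v)^3*h - 3*(2*u + v)^2*h^2 + 2*(2*u + v)*h^3
/-- `g₄₂ = 8u⁴+4u³v−6u²v²−7uv³−2v⁴−(16u³+14u²v−v³+2uv²)h+6(2u²+uv)h²−4uh³`. -/
noncomputable def g₄₂ : MvPolynomial (Fin 3) ℚ :=
  8*u^4 + 4*u^3*v - 6*u^2*v^2 - 7*u*v^3 - 2*v^4
    - (16*u^3 + 14*u^2*v - v^3 + 2*u*v^2)*h + 6*(2*u^2 + u*v)*h^2 - 4*u*h^3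
/-- `g₅₁ = (2w−4u−3v)h⁴`. -/
noncomputable def g₅₁ : MvPolynomial (Fin 3) ℚ := (2*w - 4*u - 3*v)*h^4
/-- `g₅₂ = u⁴v`. -/
noncomputable def g₅₂ : MvPolynomial (Fin 3) ℚ := u^4*v
/-- `g₆ = 16u⁶+105u³v³+55u²v⁴+16uv⁵+2v⁶`. -/
noncomputable def g₆ : MvPolynomial (Fin 3) ℚ :=
  16*u^6 + 105*u^3*v^3 + 55*u^2*v^4 + 16*u*v^5 + 2*v^6

/-- The ideal `I_N = ⟨g₄₁, g₄₂, g₅₁, g₅₂, g₆⟩` presenting `H^*(N~;ℚ)`, the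
rational cohomology of the variety of complete quadrics on `ℙ³`. -/
noncomputable def I_N : Ideal (MvPolynomial (Fin 3) ℚ) :=
  Ideal.span {g₄₁, g₄₂, g₅₁, g₅₂, g₆}

/-!
In the coordinates `μ = u`, `ν = 2u + v`, `ρ = h`, the classes of the quadrics through a point,
tangent to a line and tangent to a plane, the generators of `I_N` become relations between
Schubert's conditions, such as `μ⁴(ν - 2μ)` and its dual `ρ⁴(ν - 2ρ)`. Sending `μᵃνᵇρᶜ` to
Schubert's number of quadrics through `a` points, tangent to `b` lines and to `c` planes defines a
linear functional that vanishes on every multiple of these relations. It takes the value `1` at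
`μ⁹`, because nine general points lie on a unique quadric.
-/

section ApolarIdeal

variable {R A M : Type*} [CommSemiring R] [CommSemiring A] [Algebra R A] [AddCommMonoid M]
  [Module R M]

/-- The apolar ideal of a linear map `φ` on an algebra, in the sense of Macaulay's inverse
systems: the largest ideal contained in the kernel of `φ`. -/
def apolarIdeal (φ : A →ₗ[R] M) : Ideal A where
  carrier := {p | ∀ q, φ (q * p) = 0}
  zero_mem' q := by rw [mul_zero, map_zero]
  add_mem' hp hp' q := by rw [mul_add, map_add, hp q, hp' q, add_zero]
  smul_mem' r p hp q := by rw [smul_eq_mul, ← mul_assoc, hp]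

theorem map_eq_zero_of_mem_apolarIdeal {φ : A →ₗ[R] M} {p : A} (hp : p ∈ apolarIdeal φ) :
    φ p = 0 := by
  simpa only [one_mul] using hp 1

theorem mem_apolarIdeal_of_forall_monomial {σ : Type*} {φ : MvPolynomial σ R →ₗ[R] M}
    {p : MvPolynomial σ R} (hp : ∀ s, φ (monomial s 1 * p) = 0) : p ∈ apolarIdeal φ := by
  have hzero : φ ∘ₗ LinearMap.mulRight R p = 0 := by
    refine (basisMonomials σ R).ext fun s => ?_
    simpa using hp s
  exact fun q => LinearMap.congr_fun hzero q

end ApolarIdeal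

theorem monomial_one_fin_three {R : Type*} [CommSemiring R] (s : Fin 3 →₀ ℕ) :
    (monomial s 1 : MvPolynomial (Fin 3) R) = X 0 ^ s 0 * X 1 ^ s 1 * X 2 ^ s 2 := by
  rw [monomial_eq, Finsupp.prod_fintype _ _ fun _ => pow_zero _, Fin.prod_univ_three, C_1, one_mul]

@[elab_as_elim]
theorem of_add_add_eq_of_forall_le {d : ℕ} {P : ℕ → ℕ → ℕ → Prop}
    (hP : ∀ a ≤ d, ∀ b ≤ d - a, P a b (d - a - b)) {a b c : ℕ} (hdeg : a + b + c = d) :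
    P a b c := by
  obtain rfl : c = d - a - b := by omega
  exact hP a (by omega) b (by omega)

namespace CompleteQuadrics

/-- Schubert's characteristic numbers of quadrics in `ℙ³`. Row `c`, column `a` holds the number of
quadrics through `a` points, tangent to `9 - a - c` lines and to `c` planes in general position. -/
def schubertTable : List (List ℤ) :=
  [[92,  92,  80,  56, 32, 16,  8, 4, 2, 1],
   [92, 104, 104,  80, 48, 24, 12, 6, 3],
   [80, 104, 128, 112, 72, 36, 18, 9],
   [56,  80, 112, 104, 68, 34, 17],
   [32,  48,  72,  68, 42, 21],
   [16,  24,  36,  34, 21],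
   [ 8,  12,  18,  17],
   [ 4,   6,   9],
   [ 2,   3],
   [ 1]]

/-- The number of quadrics in `ℙ³` through `a` points, tangent to `b` lines and to `c` planes in
general position, set to `0` unless `a + b + c = 9` (the dimension of the space of quadrics). -/
def characteristicNumber (a b c : ℕ) : ℤ :=
  if a + b + c = 9 then (schubertTable.getD c []).getD a 0 else 0

theorem characteristicNumber_of_ne {a b c : ℕ} (hdeg : a + b + c ≠ 9) :
    characteristicNumber a b c = 0 :=
  if_neg hdeg

theorem characteristicNumber_dual (a b c : ℕ) :
    characteristicNumber a b c = characteristicNumber c b a := by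
  by_cases hdeg : a + b + c = 9
  · refine of_add_add_eq_of_forall_le ?_ hdeg
    decide
  · rw [characteristicNumber_of_ne hdeg, characteristicNumber_of_ne (by omega)]

-- `2μ - ν` is the divisor of degenerations to double planes. These form a family of dimension `3`,
-- so four general point conditions avoid it.
theorem characteristicNumber_points_relation (a b c : ℕ) :
    characteristicNumber (a + 4) (b + 1) c = 2 * characteristicNumber (a + 5) b c := by
  by_cases hdeg : a + b + c = 4
  · refine of_add_add_eq_of_forall_le ?_ hdeg
    decide
  · simp (disch := omega) only [characteristicNumber_of_ne, mul_zero]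

theorem characteristicNumber_planes_relation (a b c : ℕ) :
    characteristicNumber a (b + 1) (c + 4) = 2 * characteristicNumber a b (c + 5) := by
  rw [characteristicNumber_dual, characteristicNumber_points_relation, characteristicNumber_dual]

theorem characteristicNumber_antisymmetric_quartic_relation (a b c : ℕ) :
    2 * characteristicNumber a (b + 1) (c + 3) - 3 * characteristicNumber a (b + 2) (c + 2)
      + 2 * characteristicNumber a (b + 3) (c + 1) - 2 * characteristicNumber (a + 1) (b + 3) c
      + 3 * characteristicNumber (a + 2) (b + 2) c - 2 * characteristicNumber (a + 3) (b + 1) c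
      = 0 := by
  by_cases hdeg : a + b + c = 5
  · refine of_add_add_eq_of_forall_le ?_ hdeg
    decide
  · simp (disch := omega) only [characteristicNumber_of_ne, mul_zero, add_zero, sub_zero]

theorem characteristicNumber_quartic_relation (a b c : ℕ) :
    8 * characteristicNumber (a + 3) (b + 1) c - 12 * characteristicNumber (a + 2) (b + 2) c
      + 9 * characteristicNumber (a + 1) (b + 3) c - 2 * characteristicNumber a (b + 4) c
      - 4 * characteristicNumber (a + 3) b (c + 1)
      + 6 * characteristicNumber (a + 2) (b + 1) (c + 1)
      - 8 * characteristicNumber (a + 1) (b + 2) (c + 1)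
      + characteristicNumber a (b + 3) (c + 1)
      + 6 * characteristicNumber (a + 1) (b + 1) (c + 2)
      - 4 * characteristicNumber (a + 1) b (c + 3) = 0 := by
  by_cases hdeg : a + b + c = 5
  · refine of_add_add_eq_of_forall_le ?_ hdeg
    decide
  · simp (disch := omega) only [characteristicNumber_of_ne, mul_zero, add_zero, sub_zero]

theorem characteristicNumber_sextic_relation (a b c : ℕ) :
    24 * characteristicNumber (a + 6) b c - 15 * characteristicNumber (a + 3) (b + 3) c
      + 15 * characteristicNumber (a + 2) (b + 4) c - 8 * characteristicNumber (a + 1) (b + 5) c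
      + 2 * characteristicNumber a (b + 6) c = 0 := by
  by_cases hdeg : a + b + c = 3
  · refine of_add_add_eq_of_forall_le ?_ hdeg
    decide
  · simp (disch := omega) only [characteristicNumber_of_ne, mul_zero, add_zero, sub_zero]

local notation "μ" => (X 0 : MvPolynomial (Fin 3) ℚ)
local notation "ν" => (X 1 : MvPolynomial (Fin 3) ℚ)
local notation "ρ" => (X 2 : MvPolynomial (Fin 3) ℚ)

/-- Integration over the variety of complete quadrics, as a functional on polynomials in the
point, line and plane conditions `μ`, `ν`, `ρ`, which are the variables `X 0`, `X 1`, `X 2`. -/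
noncomputable def integral : MvPolynomial (Fin 3) ℚ →ₗ[ℚ] ℚ :=
  (basisMonomials (Fin 3) ℚ).constr ℚ fun s => (characteristicNumber (s 0) (s 1) (s 2) : ℚ)

theorem integral_pow_mul_pow_mul_pow (a b c : ℕ) :
    integral (μ ^ a * ν ^ b * ρ ^ c) = characteristicNumber a b c := by
  let s : Fin 3 →₀ ℕ := Finsupp.equivFunOnFinite.symm ![a, b, c]
  calc integral (μ ^ a * ν ^ b * ρ ^ c)
    _ = integral (basisMonomials (Fin 3) ℚ s) :=
      congrArg integral (by rw [coe_basisMonomials]; exact (monomial_one_fin_three s).symm)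
    _ = characteristicNumber a b c := (basisMonomials (Fin 3) ℚ).constr_basis ℚ _ s

theorem mem_apolarIdeal_integral {p : MvPolynomial (Fin 3) ℚ}
    (hp : ∀ a b c : ℕ, integral (μ ^ a * ν ^ b * ρ ^ c * p) = 0) : p ∈ apolarIdeal integral :=
  mem_apolarIdeal_of_forall_monomial fun s => by rw [monomial_one_fin_three]; exact hp _ _ _

theorem points_relation_mem : μ ^ 4 * (ν - 2 * μ) ∈ apolarIdeal integral := by
  refine mem_apolarIdeal_integral fun a b c => ?_
  have hexpand : μ ^ a * ν ^ b * ρ ^ c * (μ ^ 4 * (ν - 2 * μ)) =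
      μ ^ (a + 4) * ν ^ (b + 1) * ρ ^ c - (2 : ℚ) • (μ ^ (a + 5) * ν ^ b * ρ ^ c) := by
    simp only [smul_eq_C_mul, map_ofNat]
    ring
  rw [hexpand]
  simp only [map_sub, map_smul, integral_pow_mul_pow_mul_pow, smul_eq_mul]
  exact_mod_cast sub_eq_zero.2 (characteristicNumber_points_relation a b c)

theorem planes_relation_mem : ρ ^ 4 * (ν - 2 * ρ) ∈ apolarIdeal integral := by
  refine mem_apolarIdeal_integral fun a b c => ?_
  have hexpand : μ ^ a * ν ^ b * ρ ^ c * (ρ ^ 4 * (ν - 2 * ρ)) =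
      μ ^ a * ν ^ (b + 1) * ρ ^ (c + 4) - (2 : ℚ) • (μ ^ a * ν ^ b * ρ ^ (c + 5)) := by
    simp only [smul_eq_C_mul, map_ofNat]
    ring
  rw [hexpand]
  simp only [map_sub, map_smul, integral_pow_mul_pow_mul_pow, smul_eq_mul]
  exact_mod_cast sub_eq_zero.2 (characteristicNumber_planes_relation a b c)

theorem antisymmetric_quartic_relation_mem :
    ν * (2 * ρ ^ 3 - 3 * ν * ρ ^ 2 + 2 * ν ^ 2 * ρ - 2 * μ * ν ^ 2 + 3 * μ ^ 2 * ν - 2 * μ ^ 3)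
      ∈ apolarIdeal integral := by
  refine mem_apolarIdeal_integral fun a b c => ?_
  have hexpand : μ ^ a * ν ^ b * ρ ^ c * (ν * (2 * ρ ^ 3 - 3 * ν * ρ ^ 2 + 2 * ν ^ 2 * ρ
      - 2 * μ * ν ^ 2 + 3 * μ ^ 2 * ν - 2 * μ ^ 3)) =
      (2 : ℚ) • (μ ^ a * ν ^ (b + 1) * ρ ^ (c + 3)) - (3 : ℚ) • (μ ^ a * ν ^ (b + 2) * ρ ^ (c + 2))
        + (2 : ℚ) • (μ ^ a * ν ^ (b + 3) * ρ ^ (c + 1))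
        - (2 : ℚ) • (μ ^ (a + 1) * ν ^ (b + 3) * ρ ^ c)
        + (3 : ℚ) • (μ ^ (a + 2) * ν ^ (b + 2) * ρ ^ c)
        - (2 : ℚ) • (μ ^ (a + 3) * ν ^ (b + 1) * ρ ^ c) := by
    simp only [smul_eq_C_mul, map_ofNat]
    ring
  rw [hexpand]
  simp only [map_add, map_sub, map_smul, integral_pow_mul_pow_mul_pow, smul_eq_mul]
  exact_mod_cast characteristicNumber_antisymmetric_quartic_relation a b c

theorem quartic_relation_mem :
    8 * μ ^ 3 * ν - 12 * μ ^ 2 * ν ^ 2 + 9 * μ * ν ^ 3 - 2 * ν ^ 4 - 4 * μ ^ 3 * ρ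
      + 6 * μ ^ 2 * ν * ρ - 8 * μ * ν ^ 2 * ρ + ν ^ 3 * ρ + 6 * μ * ν * ρ ^ 2 - 4 * μ * ρ ^ 3
      ∈ apolarIdeal integral := by
  refine mem_apolarIdeal_integral fun a b c => ?_
  have hexpand : μ ^ a * ν ^ b * ρ ^ c * (8 * μ ^ 3 * ν - 12 * μ ^ 2 * ν ^ 2 + 9 * μ * ν ^ 3
      - 2 * ν ^ 4 - 4 * μ ^ 3 * ρ + 6 * μ ^ 2 * ν * ρ - 8 * μ * ν ^ 2 * ρ + ν ^ 3 * ρ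
      + 6 * μ * ν * ρ ^ 2 - 4 * μ * ρ ^ 3) =
      (8 : ℚ) • (μ ^ (a + 3) * ν ^ (b + 1) * ρ ^ c) - (12 : ℚ) • (μ ^ (a + 2) * ν ^ (b + 2) * ρ ^ c)
        + (9 : ℚ) • (μ ^ (a + 1) * ν ^ (b + 3) * ρ ^ c) - (2 : ℚ) • (μ ^ a * ν ^ (b + 4) * ρ ^ c)
        - (4 : ℚ) • (μ ^ (a + 3) * ν ^ b * ρ ^ (c + 1))
        + (6 : ℚ) • (μ ^ (a + 2) * ν ^ (b + 1) * ρ ^ (c + 1))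
        - (8 : ℚ) • (μ ^ (a + 1) * ν ^ (b + 2) * ρ ^ (c + 1)) + μ ^ a * ν ^ (b + 3) * ρ ^ (c + 1)
        + (6 : ℚ) • (μ ^ (a + 1) * ν ^ (b + 1) * ρ ^ (c + 2))
        - (4 : ℚ) • (μ ^ (a + 1) * ν ^ b * ρ ^ (c + 3)) := by
    simp only [smul_eq_C_mul, map_ofNat]
    ring
  rw [hexpand]
  simp only [map_add, map_sub, map_smul, integral_pow_mul_pow_mul_pow, smul_eq_mul]
  exact_mod_cast characteristicNumber_quartic_relation a b c

theorem sextic_relation_mem :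
    24 * μ ^ 6 - 15 * μ ^ 3 * ν ^ 3 + 15 * μ ^ 2 * ν ^ 4 - 8 * μ * ν ^ 5 + 2 * ν ^ 6
      ∈ apolarIdeal integral := by
  refine mem_apolarIdeal_integral fun a b c => ?_
  have hexpand : μ ^ a * ν ^ b * ρ ^ c * (24 * μ ^ 6 - 15 * μ ^ 3 * ν ^ 3 + 15 * μ ^ 2 * ν ^ 4
      - 8 * μ * ν ^ 5 + 2 * ν ^ 6) =
      (24 : ℚ) • (μ ^ (a + 6) * ν ^ b * ρ ^ c) - (15 : ℚ) • (μ ^ (a + 3) * ν ^ (b + 3) * ρ ^ c)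
        + (15 : ℚ) • (μ ^ (a + 2) * ν ^ (b + 4) * ρ ^ c)
        - (8 : ℚ) • (μ ^ (a + 1) * ν ^ (b + 5) * ρ ^ c)
        + (2 : ℚ) • (μ ^ a * ν ^ (b + 6) * ρ ^ c) := by
    simp only [smul_eq_C_mul, map_ofNat]
    ring
  rw [hexpand]
  simp only [map_add, map_sub, map_smul, integral_pow_mul_pow_mul_pow, smul_eq_mul]
  exact_mod_cast characteristicNumber_sextic_relation a b c

/-- The substitution that rewrites a polynomial in `u`, `v`, `w` in terms of `μ = u`,
`ν = 2u + v`, `ρ = h`. -/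
noncomputable def toConditions : MvPolynomial (Fin 3) ℚ →ₐ[ℚ] MvPolynomial (Fin 3) ℚ :=
  aeval ![μ, ν - 2 * μ, 2 * ν - μ - ρ]

theorem toConditions_u : toConditions u = μ := by simp [toConditions, u]

theorem toConditions_v : toConditions v = ν - 2 * μ := by simp [toConditions, v]

theorem toConditions_w : toConditions w = 2 * ν - μ - ρ := by simp [toConditions, w]

theorem toConditions_h : toConditions h = ρ := by
  simp only [h, map_add, map_sub, map_mul, map_ofNat, toConditions_u, toConditions_v,
    toConditions_w]
  ring

theorem toConditions_g₄₁_mem : toConditions g₄₁ ∈ apolarIdeal integral := by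
  convert antisymmetric_quartic_relation_mem using 1
  simp only [g₄₁, map_add, map_sub, map_mul, map_pow, map_neg, map_ofNat, toConditions_u,
    toConditions_v, toConditions_h]
  ring

theorem toConditions_g₄₂_mem : toConditions g₄₂ ∈ apolarIdeal integral := by
  convert quartic_relation_mem using 1
  simp only [g₄₂, map_add, map_sub, map_mul, map_pow, map_ofNat, toConditions_u,
    toConditions_v, toConditions_h]
  ring

theorem toConditions_g₅₁_mem : toConditions g₅₁ ∈ apolarIdeal integral := by
  convert planes_relation_mem using 1
  simp only [g₅₁, map_sub, map_mul, map_pow, map_ofNat, toConditions_u, toConditions_v,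
    toConditions_w, toConditions_h]
  ring

theorem toConditions_g₅₂_mem : toConditions g₅₂ ∈ apolarIdeal integral := by
  simpa only [g₅₂, map_mul, map_pow, toConditions_u, toConditions_v] using points_relation_mem

theorem toConditions_g₆_mem : toConditions g₆ ∈ apolarIdeal integral := by
  convert add_mem sextic_relation_mem
    (Ideal.mul_mem_left _ (176 * μ - 110 * ν) points_relation_mem) using 1
  simp only [g₆, map_add, map_mul, map_pow, map_ofNat, toConditions_u, toConditions_v]
  ring

theorem I_N_le_comap_apolarIdeal : I_N ≤ (apolarIdeal integral).comap toConditions := by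
  refine Ideal.span_le.2 ?_
  simp only [Set.insert_subset_iff, Set.singleton_subset_iff, SetLike.mem_coe, Ideal.mem_comap]
  exact ⟨toConditions_g₄₁_mem, toConditions_g₄₂_mem, toConditions_g₅₁_mem, toConditions_g₅₂_mem,
    toConditions_g₆_mem⟩

theorem integral_toConditions_u_pow_nine : integral (toConditions (u ^ 9)) = 1 := by
  have hvalue := integral_pow_mul_pow_mul_pow 9 0 0
  have hone : characteristicNumber 9 0 0 = 1 := by decide
  rwa [pow_zero, pow_zero, mul_one, mul_one, hone, Int.cast_one, ← toConditions_u, ← map_pow]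
    at hvalue

end CompleteQuadrics

open CompleteQuadrics

/-- `u⁹ ∉ I_N`: the top characteristic `∫ u⁹ = 1` is nonzero. -/
theorem u9_not_mem : u^9 ∉ I_N := by
  intro hmem
  have hzero : integral (toConditions (u ^ 9)) = 0 :=
    map_eq_zero_of_mem_apolarIdeal (Ideal.mem_comap.1 (I_N_le_comap_apolarIdeal hmem))
  exact one_ne_zero (integral_toConditions_u_pow_nine.symm.trans hzero)
end

section
/- Let I_N ⊆ ℚ[u,v,w] be the ideal generated, with h = 3u+2v−w, by g₄₁ = −8u⁴−14u³v−9u²v²−2uv³+2(2u+v)³h−3(2u+v)²h²+2(2u+v)h³, g₄₂ = 8u⁴+4u³v−6u²v²−7uv³−2v⁴−(16u³+14u²v−v³+2uv²)h+6(2u²+uv)h²−4uh³, g₅₁ = (2w−4u−3v)h⁴, g₅₂ = u⁴v, and g₆ = 16u⁶+105u³v³+55u²v⁴+16uv⁵+2v⁶. Then every degree-9 monomial u^r v^s w^t with t = 1 or t = 2 belongs to I_N, and moreover the monomials u⁸v, u⁷v², u⁶v³, u⁵v⁴, u⁴v⁵, u⁵vw³, u⁴v²w³, u⁴vw⁴,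 and u²vw⁶ belong to I_N. -/
open MvPolynomial

/-!
Two combinations of the quartic generators are far simpler than the generators themselves:
`2u·g₄₁ + (2u+v)·g₄₂ = -((u+v)⁴ - u⁴)·w`, and `g₄₁ + g₄₂` is `v` times a cubic. Modulo `u⁴v`, the
first trades powers of `v` for powers of `u` in monomials divisible by `w`, so it kills every
`uʳvˢw` with `r + s ≥ 7` and `s ≥ 1`; together with `u·g₆·w` this also kills `u⁷w`. All monomials
with `t = 1, 2` are multiples of these. The cubic lowers powers of `w` and expresses `u²vw⁶` as a
multiple of `u³v³w³`, whose coefficient turns out to be zero. The remaining monomials are multiples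
of `u⁴v`.
-/

section CommRing

variable {R : Type*} [CommRing R] {x y z : R}

theorem pow_mul_pow_mul_eq_zero_of_add_pow_mul_eq {n : ℕ} (hxy : x ^ n * y = 0)
    (hadd : (x + y) ^ n * z = x ^ n * z) {r s : ℕ} (hs : 1 ≤ s) (hrs : 2 * n ≤ r + s + 1) :
    x ^ r * y ^ s * z = 0 := by
  obtain hr | hr := le_or_gt n r
  · have hdvd : x ^ n * y ∣ x ^ r * y ^ s * z :=
      (mul_dvd_mul (pow_dvd_pow x hr) (dvd_pow_self y (by lia))).mul_right z
    exact eq_zero_of_zero_dvd (hxy ▸ hdvd)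
  obtain ⟨m, rfl⟩ : ∃ m, n = m + 1 := ⟨n - 1, by lia⟩
  obtain ⟨e, rfl⟩ : ∃ e, s = m + 1 + e := ⟨s - (m + 1), by lia⟩
  -- Descending induction on `r`: multiply the binomial expansion of `hadd` by `x ^ r * y ^ e`.
  have hmiddle : ∀ k ∈ Finset.range m,
      x ^ r * y ^ e * (x ^ (k + 1) * y ^ (m + 1 - (k + 1)) * ((m + 1).choose (k + 1)) * z) = 0 := by
    intro k hk
    have hk : k < m := Finset.mem_range.1 hk
    have hvanish : x ^ (r + (k + 1)) * y ^ (m + 1 - (k + 1) + e) * z = 0 :=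
      pow_mul_pow_mul_eq_zero_of_add_pow_mul_eq hxy hadd (by lia) (by lia)
    linear_combination ((m + 1).choose (k + 1) : R) * hvanish
  rw [add_pow, Finset.sum_range_succ, Finset.sum_range_succ', add_mul, add_mul, Finset.sum_mul]
    at hadd
  have hsum := Finset.sum_eq_zero hmiddle
  rw [← Finset.mul_sum] at hsum
  simp only [Nat.choose_zero_right, Nat.choose_self, Nat.sub_self, Nat.sub_zero, Nat.cast_one]
    at hadd
  linear_combination x ^ r * y ^ e * hadd - hsum
termination_by n - r

theorem pow_seven_mul_eq_zero_of_sextic (h2 : IsUnit (2 : R)) (hxy : x ^ 4 * y = 0)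
    (hadd : (x + y) ^ 4 * z = x ^ 4 * z)
    (hsextic : 16 * x ^ 6 + 105 * x ^ 3 * y ^ 3 + 55 * x ^ 2 * y ^ 4 + 16 * x * y ^ 5
      + 2 * y ^ 6 = 0) :
    x ^ 7 * z = 0 := by
  have hvanish {r s : ℕ} (hs : 1 ≤ s) (hrs : 2 * 4 ≤ r + s + 1) : x ^ r * y ^ s * z = 0 :=
    pow_mul_pow_mul_eq_zero_of_add_pow_mul_eq hxy hadd hs hrs
  have h₄₃ : x ^ 4 * y ^ 3 * z = 0 := hvanish (by simp) (by simp)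
  have h₃₄ : x ^ 3 * y ^ 4 * z = 0 := hvanish (by simp) (by simp)
  have h₂₅ : x ^ 2 * y ^ 5 * z = 0 := hvanish (by simp) (by simp)
  have h₁₆ : x ^ 1 * y ^ 6 * z = 0 := hvanish (by simp) (by simp)
  have hmul : 2 ^ 4 * (x ^ 7 * z) = 0 := by
    linear_combination x * z * hsextic - 105 * h₄₃ - 55 * h₃₄ - 16 * h₂₅ - 2 * h₁₆
  exact (h2.pow 4).mul_right_eq_zero.1 hmul

theorem sq_mul_mul_pow_six_eq_zero_of_cubic (h2 : IsUnit (2 : R)) (hxy : x ^ 4 * y = 0)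
    (hadd : (x + y) ^ 4 * z = x ^ 4 * z)
    (hcubic : y * (4 * (5 * x ^ 3 + 11 * x ^ 2 * y + 8 * x * y ^ 2 + 2 * y ^ 3)
      - (28 * x ^ 2 + 40 * x * y + 15 * y ^ 2) * z + (12 * x + 9 * y) * z ^ 2
      - 2 * z ^ 3) = 0) :
    x ^ 2 * y * z ^ 6 = 0 := by
  have h₃₄₁ : x ^ 3 * y ^ 4 * z = 0 :=
    pow_mul_pow_mul_eq_zero_of_add_pow_mul_eq hxy hadd (by simp) (by simp)
  have h₂₅₁ : x ^ 2 * y ^ 5 * z = 0 :=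
    pow_mul_pow_mul_eq_zero_of_add_pow_mul_eq hxy hadd (by simp) (by simp)
  have h₂₄₁ : x ^ 2 * y ^ 4 * z = -4 * (x ^ 3 * y ^ 3 * z) := by
    linear_combination x ^ 2 * hadd - (4 * x + 6 * y) * z * hxy
  have hcubic₃ : x ^ 3 * y * (8 * y ^ 3 - 15 * y ^ 2 * z + 9 * y * z ^ 2 - 2 * z ^ 3) = 0 := by
    linear_combination x ^ 3 * hcubic - (20 * x ^ 2 + 44 * x * y + 32 * y ^ 2
      - (28 * x + 40 * y) * z + 12 * z ^ 2) * hxy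
  have hcubic₂ : x ^ 2 * y * z * (-(40 * x * y + 15 * y ^ 2) * z
      + (12 * x + 9 * y) * z ^ 2 - 2 * z ^ 3) = 0 := by
    linear_combination x ^ 2 * z * hcubic - (20 * x + 44 * y - 28 * z) * z * hxy - 8 * h₂₄₁
  have h₃₂₄ : 2 * (x ^ 3 * y ^ 2 * z ^ 4) = 9 * (x ^ 3 * y ^ 3 * z ^ 3) := by
    linear_combination -y * z * hcubic₃ + (8 * y - 15 * z) * h₃₄₁
  have h₃₁₅ : 4 * (x ^ 3 * y * z ^ 5) = 51 * (x ^ 3 * y ^ 3 * z ^ 3) := by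
    linear_combination -2 * z ^ 2 * hcubic₃ + 16 * z * h₃₄₁ + 9 * h₃₂₄
  have h₂₃₄ : 2 * (x ^ 2 * y ^ 3 * z ^ 4) = -24 * (x ^ 3 * y ^ 3 * z ^ 3) := by
    linear_combination -y ^ 2 * hcubic₂ - 40 * z * h₃₄₁ - 15 * z * h₂₅₁ + 9 * z ^ 2 * h₂₄₁
  have h₂₂₅ : 4 * (x ^ 2 * y ^ 2 * z ^ 5) = -68 * (x ^ 3 * y ^ 3 * z ^ 3) := by
    linear_combination -2 * y * z * hcubic₂ - 30 * z ^ 2 * h₂₄₁ + 12 * h₃₂₄ + 9 * h₂₃₄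
  have hmul : 2 ^ 3 * (x ^ 2 * y * z ^ 6) = 0 := by
    linear_combination -4 * z ^ 2 * hcubic₂ - 80 * h₃₂₄ - 30 * h₂₃₄ + 12 * h₃₁₅ + 9 * h₂₂₅
  exact (h2.pow 3).mul_right_eq_zero.1 hmul

end CommRing

theorem g₄₁_mem_I_N : g₄₁ ∈ I_N := Ideal.subset_span (by simp)

theorem g₄₂_mem_I_N : g₄₂ ∈ I_N := Ideal.subset_span (by simp)

theorem g₅₂_mem_I_N : g₅₂ ∈ I_N := Ideal.subset_span (by simp)

theorem g₆_mem_I_N : g₆ ∈ I_N := Ideal.subset_span (by simp)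

theorem two_mul_u_mul_g₄₁_add_mul_g₄₂ :
    2 * u * g₄₁ + (2 * u + v) * g₄₂ = -(((u + v) ^ 4 - u ^ 4) * w) := by
  simp only [g₄₁, g₄₂, h]
  ring

theorem g₄₁_add_g₄₂ :
    g₄₁ + g₄₂ = v * (4 * (5 * u ^ 3 + 11 * u ^ 2 * v + 8 * u * v ^ 2 + 2 * v ^ 3)
      - (28 * u ^ 2 + 40 * u * v + 15 * v ^ 2) * w + (12 * u + 9 * v) * w ^ 2
      - 2 * w ^ 3) := by
  simp only [g₄₁, g₄₂, h]
  ring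

local notation "π" => Ideal.Quotient.mk I_N

theorem isUnit_two_quotient_I_N : IsUnit (2 : MvPolynomial (Fin 3) ℚ ⧸ I_N) := by
  rw [← map_ofNat (algebraMap ℚ (MvPolynomial (Fin 3) ℚ ⧸ I_N)) 2]
  exact (IsUnit.mk0 (2 : ℚ) two_ne_zero).map _

theorem mk_u_pow_four_mul_mk_v : π u ^ 4 * π v = 0 := by
  simpa [g₅₂] using Ideal.Quotient.eq_zero_iff_mem.2 g₅₂_mem_I_N

theorem mk_u_add_mk_v_pow_four_mul_mk_w : (π u + π v) ^ 4 * π w = π u ^ 4 * π w := by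
  have hmem : 2 * u * g₄₁ + (2 * u + v) * g₄₂ ∈ I_N :=
    add_mem (I_N.mul_mem_left _ g₄₁_mem_I_N) (I_N.mul_mem_left _ g₄₂_mem_I_N)
  rw [two_mul_u_mul_g₄₁_add_mul_g₄₂, neg_mem_iff, ← Ideal.Quotient.eq_zero_iff_mem] at hmem
  simp only [map_mul, map_sub, map_pow, map_add] at hmem
  linear_combination hmem

theorem u_pow_add_four_mul_v_pow_succ_mul_w_pow_mem_I_N (r s t : ℕ) :
    u ^ (r + 4) * v ^ (s + 1) * w ^ t ∈ I_N :=
  I_N.mem_of_dvd ⟨u ^ r * v ^ s * w ^ t, by rw [g₅₂]; ring⟩ g₅₂_mem_I_N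

theorem u_pow_seven_mul_w_mem_I_N : u ^ 7 * w ∈ I_N := by
  have hsextic := Ideal.Quotient.eq_zero_iff_mem.2 g₆_mem_I_N
  simp only [g₆, map_add, map_mul, map_pow, map_ofNat] at hsextic
  simpa [← Ideal.Quotient.eq_zero_iff_mem] using pow_seven_mul_eq_zero_of_sextic
    isUnit_two_quotient_I_N mk_u_pow_four_mul_mk_v mk_u_add_mk_v_pow_four_mul_mk_w hsextic

theorem u_pow_mul_v_pow_mul_w_mem_I_N {r s : ℕ} (hrs : 7 ≤ r + s) : u ^ r * v ^ s * w ∈ I_N := by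
  obtain rfl | hs := Nat.eq_zero_or_pos s
  · have hdvd : u ^ 7 * w ∣ u ^ r * v ^ 0 * w := by
      simpa using mul_dvd_mul_right (pow_dvd_pow u hrs) w
    exact I_N.mem_of_dvd hdvd u_pow_seven_mul_w_mem_I_N
  · rw [← Ideal.Quotient.eq_zero_iff_mem]
    simpa only [map_mul, map_pow] using pow_mul_pow_mul_eq_zero_of_add_pow_mul_eq
      mk_u_pow_four_mul_mk_v mk_u_add_mk_v_pow_four_mul_mk_w hs (by lia)

theorem u_sq_mul_v_mul_w_pow_six_mem_I_N : u ^ 2 * v * w ^ 6 ∈ I_N := by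
  have hcubic := Ideal.Quotient.eq_zero_iff_mem.2 (add_mem g₄₁_mem_I_N g₄₂_mem_I_N)
  simp only [g₄₁_add_g₄₂, map_add, map_sub, map_mul, map_pow, map_ofNat] at hcubic
  simpa [← Ideal.Quotient.eq_zero_iff_mem] using sq_mul_mul_pow_six_eq_zero_of_cubic
    isUnit_two_quotient_I_N mk_u_pow_four_mul_mk_v mk_u_add_mk_v_pow_four_mul_mk_w hcubic

/-- Every degree-9 monomial `u^r v^s w^t` with `t = 1` or `t = 2` lies in `I_N`,
as do the further listed monomials with vanishing characteristic number. -/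
theorem vanishing_characteristics_N :
    (∀ r s t : ℕ, r + s + t = 9 → (t = 1 ∨ t = 2) → u^r * v^s * w^t ∈ I_N) ∧
    u^8*v ∈ I_N ∧ u^7*v^2 ∈ I_N ∧ u^6*v^3 ∈ I_N ∧ u^5*v^4 ∈ I_N ∧
    u^4*v^5 ∈ I_N ∧ u^5*v*w^3 ∈ I_N ∧ u^4*v^2*w^3 ∈ I_N ∧ u^4*v*w^4 ∈ I_N ∧
    u^2*v*w^6 ∈ I_N := by
  have hmem := u_pow_add_four_mul_v_pow_succ_mul_w_pow_mem_I_N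
  refine ⟨fun r s t hdeg ht ↦ ?_, ?_, ?_, ?_, ?_, ?_, ?_, ?_, ?_, u_sq_mul_v_mul_w_pow_six_mem_I_N⟩
  · have hw : u ^ r * v ^ s * w ∣ u ^ r * v ^ s * w ^ t :=
      mul_dvd_mul_left _ (dvd_pow_self w (by lia))
    exact I_N.mem_of_dvd hw (u_pow_mul_v_pow_mul_w_mem_I_N (by lia))
  · simpa using hmem 4 0 0
  · simpa using hmem 3 1 0
  · simpa using hmem 2 2 0
  · simpa using hmem 1 3 0
  · simpa using hmem 0 4 0
  · simpa using hmem 1 0 3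
  · simpa using hmem 0 1 3
  · simpa using hmem 0 0 4
end
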